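/- Let A ∈ ℝ^{n×n} be symmetric, let S be a subset of the index set {1,…,n}, and let Q ∈ ℝ^{n×n} be an orthogonal matrix that agrees with the identity matrix outside the principal submatrix on S (that is, Q(k,l) = δ_{kl} whenever k ∉ S or l ∉ S). Set B = Qᵀ A Q. If the principal submatrix of B on S is diagonal (B(k,l) = 0 for all k ≠ l with k, l ∈ S), then Ξ(B)² = Ξ(A)² − Σ_{k≠l, k,l∈S} A(k,l)². -/

import Mathlib

open Matrix

/-- The squared off-diagonal norm `Ξ(A)² = Σ_{i≠j} A(i,j)²`. -/
noncomputable def offDiagSq {n : ℕ} (A : Matrix (Fin n) (Fin n) ℝ) : ℝ :=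
  ∑ i, ∑ j, if i ≠ j then (A i j) ^ 2 else 0

/-- The off-diagonal norm `Ξ(A)`. -/
noncomputable def offXi {n : ℕ} (A : Matrix (Fin n) (Fin n) ℝ) : ℝ :=
  Real.sqrt (offDiagSq A)

/-- Indicator diagonal matrix of `S`. -/
noncomputable def projS {n : ℕ} (S : Finset (Fin n)) : Matrix (Fin n) (Fin n) ℝ :=
  Matrix.diagonal (fun i => if i ∈ S then 1 else 0)

lemma frob_eq_trace {n : ℕ} (M : Matrix (Fin n) (Fin n) ℝ) :
    (Mᵀ * M).trace = ∑ i, ∑ j, (M i j) ^ 2 := by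
  rw [Finset.sum_comm]
  simp [Matrix.trace, Matrix.mul_apply, sq]

lemma frob_conj {n : ℕ} (M Q : Matrix (Fin n) (Fin n) ℝ) (hQ' : Q * Qᵀ = 1) :
    ∑ i, ∑ j, ((Qᵀ * M * Q) i j) ^ 2 = ∑ i, ∑ j, (M i j) ^ 2 := by
  rw [← frob_eq_trace, ← frob_eq_trace]
  have : (Qᵀ * M * Q)ᵀ * (Qᵀ * M * Q) = Qᵀ * (Mᵀ * M * Q) := by
    simp only [Matrix.transpose_mul, Matrix.transpose_transpose, Matrix.mul_assoc]
    rw [← Matrix.mul_assoc Q Qᵀ, hQ', Matrix.one_mul]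
  rw [this, Matrix.trace_mul_comm, Matrix.mul_assoc, hQ', Matrix.mul_one]

lemma offDiagSq_split {n : ℕ} (S : Finset (Fin n)) (M : Matrix (Fin n) (Fin n) ℝ) :
    offDiagSq M = ∑ i, ∑ j, ((M - projS S * M * projS S) i j) ^ 2
      - ∑ i, (if i ∈ S then 0 else (M i i) ^ 2)
      + ∑ k ∈ S, ∑ l ∈ S, (if k ≠ l then M k l ^ 2 else 0) := by
  have h1 : ∑ i, (if i ∈ S then 0 else (M i i) ^ 2)
      = ∑ i, ∑ j, (if i = j then (if i ∈ S then 0 else (M i j) ^ 2) else 0) := by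
    simp
  have h2 : ∑ k ∈ S, ∑ l ∈ S, (if k ≠ l then M k l ^ 2 else 0)
      = ∑ i, ∑ j, (if i ∈ S then (if j ∈ S then (if i ≠ j then M i j ^ 2 else 0) else 0)
        else 0) := by
    rw [← Finset.sum_filter_add_sum_filter_not Finset.univ (· ∈ S)]
    rw [Finset.sum_eq_zero (s := Finset.univ.filter (fun x => ¬ x ∈ S))]
    · rw [add_zero, Finset.filter_univ_mem]
      refine Finset.sum_congr rfl fun i hi => ?_
      simp only [hi, if_true]
      simp [Finset.sum_ite_mem]
    · intro i hi
      simp only [Finset.mem_filter, Finset.mem_univ, true_and] at hi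
      simp [hi]
  rw [h1, h2, offDiagSq, ← Finset.sum_sub_distrib, ← Finset.sum_add_distrib]
  refine Finset.sum_congr rfl fun i _ => ?_
  rw [← Finset.sum_sub_distrib, ← Finset.sum_add_distrib]
  refine Finset.sum_congr rfl fun j _ => ?_
  simp only [projS, Matrix.sub_apply, Matrix.mul_diagonal, Matrix.diagonal_mul]
  by_cases hi : i ∈ S <;> by_cases hj : j ∈ S <;> by_cases hij : i = j <;>
    simp_all

lemma offXi_sq {n : ℕ} (M : Matrix (Fin n) (Fin n) ℝ) : offXi M ^ 2 = offDiagSq M := by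
  refine Real.sq_sqrt (Finset.sum_nonneg fun i _ => Finset.sum_nonneg fun j _ => ?_)
  split_ifs <;> positivity

/-- Diagonalizing the principal submatrix on an index set `S` by an orthogonal similarity
supported on `S` removes exactly the contribution of its off-diagonal entries from `Ξ(A)²`. -/
theorem block_jacobi_offdiag_decrease (n : ℕ)
    (A : Matrix (Fin n) (Fin n) ℝ) (hA : Aᵀ = A)
    (S : Finset (Fin n))
    (Q : Matrix (Fin n) (Fin n) ℝ) (hQ : Qᵀ * Q = 1)
    (hQsupp : ∀ k l : Fin n, (k ∉ S ∨ l ∉ S) → Q k l = if k = l then 1 else 0)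
    (B : Matrix (Fin n) (Fin n) ℝ) (hB : B = Qᵀ * A * Q)
    (hdiagS : ∀ k ∈ S, ∀ l ∈ S, k ≠ l → B k l = 0) :
    offXi B ^ 2 = offXi A ^ 2 - ∑ k ∈ S, ∑ l ∈ S, (if k ≠ l then A k l ^ 2 else 0) := by
  have hQ' : Q * Qᵀ = 1 := mul_eq_one_comm.mp hQ
  have hPQ : projS S * Q = Q * projS S := by
    ext i j
    simp only [projS, Matrix.mul_diagonal, Matrix.diagonal_mul]
    by_cases hi : i ∈ S <;> by_cases hj : j ∈ S
    · simp [hi, hj]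
    · have : i ≠ j := fun h => hj (h ▸ hi)
      simp [hQsupp i j (Or.inr hj), this]
    · have : i ≠ j := fun h => hi (h ▸ hj)
      simp [hQsupp i j (Or.inl hi), this]
    · simp [hi, hj]
  have hPt : (projS S)ᵀ = projS S := by simp [projS]
  have hPQt : projS S * Qᵀ = Qᵀ * projS S := by
    have := congrArg Matrix.transpose hPQ
    simpa [Matrix.transpose_mul, hPt] using this.symm
  have hR : B - projS S * B * projS S = Qᵀ * (A - projS S * A * projS S) * Q := by
    have : projS S * B * projS S = Qᵀ * (projS S * A * projS S) * Q := by
      calc projS S * B * projS S = (projS S * Qᵀ) * A * (Q * projS S) := by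
            rw [hB]; simp only [Matrix.mul_assoc]
        _ = _ := by rw [hPQt, ← hPQ]; simp only [Matrix.mul_assoc]
    rw [this, hB, Matrix.mul_sub, Matrix.sub_mul]
  have hd : ∀ i, i ∉ S → B i i = A i i := by
    intro i hi
    have hq : ∀ k, Q k i = if k = i then 1 else 0 := fun k => hQsupp k i (Or.inr hi)
    rw [hB]
    simp [Matrix.mul_apply, hq]
  have hz : ∑ k ∈ S, ∑ l ∈ S, (if k ≠ l then B k l ^ 2 else 0) = 0 := by
    refine Finset.sum_eq_zero fun k hk => Finset.sum_eq_zero fun l hl => ?_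
    split_ifs with h
    · rw [hdiagS k hk l hl h]; norm_num
    · rfl
  have hs : ∑ i, (if i ∈ S then 0 else (B i i) ^ 2)
      = ∑ i, (if i ∈ S then 0 else (A i i) ^ 2) := by
    refine Finset.sum_congr rfl fun i _ => ?_
    split_ifs with h
    · rfl
    · rw [hd i h]
  rw [offXi_sq, offXi_sq, offDiagSq_split S B, offDiagSq_split S A, hz, hs, hR,
    frob_conj _ _ hQ']
  ring
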